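/- For the square lattice L = [1, i] with e₁ = ℘(1/2) and c = (1/e₁)√(6π/73), the differential φ₃ = 2c·℘(z)·(℘(z) - 3e₁)(℘(z) + 3e₁)/℘'(z) dz has residue -4c·e₁ at z = 1/2 and residue 4c·e₁ at z = i/2, and residue 0 at z = 0. -/

import Mathlib

/-!
The residues of `φ₃` are read off from the Weierstrass equation. Multiplication by `i` preserves
the square lattice, so `g₃ = 0` and `℘ (i z) = -℘ z`; evaluating the differential equation at `1/2`,
where `℘'` vanishes by parity and periodicity, gives `g₂ = 4 e₁²` as soon as `e₁ ≠ 0`. Hence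
`℘' ^ 2 = 4 ℘ ^ 3 - 4 e₁² ℘`, and off the lattice
`φ₃ = (c / 2) ℘' - 16 c e₁² ℘ / ℘'`.
The first term has the primitive `(c / 2) ℘`, so it contributes no residue anywhere.

At a half-period `w` with `℘ w ^ 2 = e₁²`, differentiating the equation gives
`℘'' w = 6 e₁² - 2 e₁² = 4 e₁²`, so the zero of `℘'` is simple and the residue is
`-16 c e₁² ℘ w / (4 e₁²) = -4 c ℘ w`, with `℘ (1/2) = e₁` and `℘ (i/2) = -e₁`.
At `0` the quotient `℘ / ℘'` extends holomorphically, so the residue is `0`.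

If `e₁` were `0`, then `c = 0` by the convention `1 / 0 = 0`, and every claim would read `0 = 0`;
the non-vanishing of `e₁` is therefore not needed.
-/

open Complex

/-- A lattice point of the unit square lattice `L = ℤ + ℤi`. -/
noncomputable def latticePt (p : ℤ × ℤ) : ℂ := (p.1 : ℂ) + (p.2 : ℂ) * Complex.I

/-- The unit square lattice `L = ℤ + ℤi` as a subset of `ℂ`. -/
def squareLattice : Set ℂ := {z | ∃ m n : ℤ, z = (m : ℂ) + (n : ℂ) * Complex.I}

/-- The Weierstrass ℘-function of the square lattice `L = ℤ + ℤi`. -/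
noncomputable def wp (z : ℂ) : ℂ :=
  1 / z ^ 2 + ∑' p : {p : ℤ × ℤ // p ≠ 0},
    (1 / (z - latticePt p.1) ^ 2 - 1 / (latticePt p.1) ^ 2)

/-- The Weierstrass ζ-function of the square lattice `L = ℤ + ℤi`. -/
noncomputable def wzeta (z : ℂ) : ℂ :=
  1 / z + ∑' p : {p : ℤ × ℤ // p ≠ 0},
    (1 / (z - latticePt p.1) + 1 / latticePt p.1 + z / (latticePt p.1) ^ 2)

/-- The invariant `g₂ = 60 Σ' Ω⁻⁴` of the square lattice. -/
noncomputable def g2 : ℂ := 60 * ∑' p : {p : ℤ × ℤ // p ≠ 0}, (latticePt p.1) ^ (-4 : ℤ)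

/-- The invariant `g₃ = 140 Σ' Ω⁻⁶` of the square lattice. -/
noncomputable def g3 : ℂ := 140 * ∑' p : {p : ℤ × ℤ // p ≠ 0}, (latticePt p.1) ^ (-6 : ℤ)


/-- `v` is the residue of `f` at `c`: for all sufficiently small radii `r > 0`,
the normalized circle integral of `f` around `c` equals `v`. -/
def IsResidue (f : ℂ → ℂ) (c v : ℂ) : Prop :=
  ∀ᶠ r in nhdsWithin 0 (Set.Ioi (0 : ℝ)),
    (2 * (Real.pi : ℂ) * Complex.I)⁻¹ * (∮ z in C(c, r), f z) = v

open scoped Topology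

/-- A function that is, near `a`, the sum of a derivative of a single-valued function and of a
simple-pole term `h z / (z - a)` has residue `h a` at `a`. -/
lemma isResidue_of_eq_deriv_add {f D D' h : ℂ → ℂ} {a : ℂ}
    (hD : ∀ᶠ z in 𝓝[≠] a, HasDerivAt D (D' z) z)
    (hD' : ∀ᶠ z in 𝓝[≠] a, ContinuousAt D' z)
    (hh : AnalyticAt ℂ h a)
    (hf : ∀ᶠ z in 𝓝[≠] a, f z = D' z + (z - a)⁻¹ * h z) :
    IsResidue f a (h a) := by
  have h1 := hD.and (hD'.and hf)
  rw [eventually_nhdsWithin_iff] at h1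
  obtain ⟨ε, hε, H⟩ := Metric.eventually_nhds_iff_ball.mp (h1.and hh.eventually_analyticAt)
  filter_upwards [Ioo_mem_nhdsGT hε] with r hr
  obtain ⟨hr0, hrε⟩ := hr
  have hs : ∀ z ∈ Metric.sphere a r, z ∈ Metric.ball a ε ∧ z ≠ a := by
    intro z hz
    rw [mem_sphere_iff_norm] at hz
    refine ⟨by rw [mem_ball_iff_norm]; linarith, ?_⟩
    rintro rfl
    simp at hz
    linarith
  have hint1 : CircleIntegrable D' a r := by
    refine ContinuousOn.circleIntegrable hr0.le fun z hz ↦ ?_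
    exact ((H z (hs z hz).1).1 (hs z hz).2).2.1.continuousWithinAt
  have hint2 : CircleIntegrable (fun z ↦ (z - a)⁻¹ * h z) a r := by
    refine ContinuousOn.circleIntegrable hr0.le fun z hz ↦ ?_
    have h2 := (H z (hs z hz).1).2.continuousAt
    have h3 : z - a ≠ 0 := sub_ne_zero.mpr (hs z hz).2
    exact (((continuousAt_id.sub continuousAt_const).inv₀ h3).mul h2).continuousWithinAt
  have e1 : (∮ z in C(a, r), f z) = ∮ z in C(a, r), (D' z + (z - a)⁻¹ * h z) :=
    circleIntegral.integral_congr hr0.le fun z hz ↦ ((H z (hs z hz).1).1 (hs z hz).2).2.2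
  have e2 : (∮ z in C(a, r), D' z) = 0 :=
    circleIntegral.integral_eq_zero_of_hasDerivWithinAt hr0.le fun z hz ↦
      ((H z (hs z hz).1).1 (hs z hz).2).1.hasDerivWithinAt
  have e3 : (∮ z in C(a, r), (z - a)⁻¹ • h z) = (2 * Real.pi * I : ℂ) • h a := by
    have hd : DifferentiableOn ℂ h (Metric.closedBall a r) := fun z hz ↦
      (H z (Metric.closedBall_subset_ball hrε hz)).2.differentiableAt.differentiableWithinAt
    exact hd.circleIntegral_sub_inv_smul (Metric.mem_ball_self hr0)
  simp only [smul_eq_mul] at e3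
  rw [e1, circleIntegral.integral_add hint1 hint2, e2, e3, zero_add]
  have := Complex.two_pi_I_ne_zero
  field_simp

/-- The period pair `(1, i)` of the square lattice. -/
noncomputable def sqPair : PeriodPair where
  ω₁ := 1
  ω₂ := I
  indep := by
    rw [LinearIndependent.pair_iff]
    intro s t h
    have h1 := congrArg Complex.re h
    have h2 := congrArg Complex.im h
    simp at h1 h2
    exact ⟨h1, h2⟩

open PeriodPair

lemma I_mul_mem {z : ℂ} (hz : z ∈ sqPair.lattice) : I * z ∈ sqPair.lattice := by
  obtain ⟨m, n, rfl⟩ := mem_lattice.mp hz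
  refine mem_lattice.mpr ⟨-n, m, ?_⟩
  simp only [sqPair]
  push_cast
  linear_combination (-(n : ℂ)) * Complex.I_sq

/-- Multiplication by `i` as a permutation of the square lattice. -/
noncomputable def mulI : sqPair.lattice ≃ sqPair.lattice where
  toFun l := ⟨I * l, I_mul_mem l.2⟩
  invFun l := ⟨-(I * l), neg_mem (I_mul_mem l.2)⟩
  left_inv l := by
    ext
    simp [← mul_assoc]
  right_inv l := by
    ext
    simp [← mul_assoc]

lemma coe_mulI (l : sqPair.lattice) : (mulI l : ℂ) = I * l := rfl

lemma weierstrassP_I_mul (z : ℂ) : ℘[sqPair] (I * z) = -℘[sqPair] z := by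
  simp only [weierstrassP]
  rw [← mulI.tsum_eq, ← tsum_neg]
  congr with l
  rw [coe_mulI, ← mul_sub, mul_pow, mul_pow, Complex.I_sq]
  simp only [neg_mul, one_mul, div_neg]
  ring

lemma sqPair_g₃ : sqPair.g₃ = 0 := by
  have h : sqPair.G 6 = -sqPair.G 6 := by
    conv_lhs => rw [G, ← mulI.tsum_eq]
    rw [G, ← tsum_neg]
    congr with l
    have : I ^ 6 = -1 := by rw [show 6 = 2 * 3 by rfl, pow_mul, Complex.I_sq]; norm_num
    rw [coe_mulI, mul_pow, this, neg_one_mul, inv_neg]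
  rw [g₃, CharZero.eq_neg_self_iff.mp h, mul_zero]

lemma wp_eq : wp = ℘[sqPair] := by
  funext z
  have hS := (sqPair.hasSum_weierstrassP z)
  rw [← sqPair.latticeEquivProd.symm.toEquiv.hasSum_iff] at hS
  have hfun : ((fun l : sqPair.lattice ↦ 1 / (z - l) ^ 2 - 1 / (l : ℂ) ^ 2) ∘
      sqPair.latticeEquivProd.symm.toEquiv) =
      fun p : ℤ × ℤ ↦ 1 / (z - latticePt p) ^ 2 - 1 / latticePt p ^ 2 := by
    funext p
    have : ((sqPair.latticeEquivProd.symm p : sqPair.lattice) : ℂ) = latticePt p := by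
      rw [latticeEquiv_symm_apply]
      simp [latticePt, sqPair]
    simp [this]
  rw [hfun] at hS
  have h0 := hS.summable.tsum_subtype_add_tsum_subtype_compl {0}
  rw [hS.tsum_eq, tsum_singleton (0 : ℤ × ℤ)
    (fun p : ℤ × ℤ ↦ 1 / (z - latticePt p) ^ 2 - 1 / latticePt p ^ 2)] at h0
  rw [← h0, wp]
  simp [latticePt]
  rfl

lemma derivWeierstrassP_half (L : PeriodPair) {w : ℂ} (hw : 2 * w ∈ L.lattice) :
    ℘'[L] w = 0 := by
  have h := L.derivWeierstrassP_add_coe (-w) ⟨2 * w, hw⟩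
  rw [derivWeierstrassP_neg, show -w + 2 * w = w by ring] at h
  exact CharZero.eq_neg_self_iff.mp h

lemma compl_lattice_mem_nhdsNE (L : PeriodPair) (a : ℂ) : ∀ᶠ z in 𝓝[≠] a, z ∉ L.lattice := by
  rw [eventually_nhdsWithin_iff]
  filter_upwards [L.compl_lattice_sdiff_singleton_mem_nhds a] with z hz hza hzL
  exact hz ⟨hzL, hza⟩

lemma hasDerivAt_weierstrassP (L : PeriodPair) {z : ℂ} (hz : z ∉ L.lattice) :
    HasDerivAt ℘[L] (℘'[L] z) z := by
  rw [← L.deriv_weierstrassP]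
  exact (L.analyticOnNhd_weierstrassP z hz).differentiableAt.hasDerivAt

/-- `℘'` does not vanish identically near any point of the complement of the lattice: that
complement is connected, and `℘'` has a pole of order three at `0`. -/
lemma not_derivWeierstrassP_eventually_zero (L : PeriodPair) {w : ℂ} (hw : w ∉ L.lattice) :
    ¬ ∀ᶠ z in 𝓝 w, ℘'[L] z = 0 := by
  intro h
  have hc : (L.lattice : Set ℂ).Countable := by
    rw [← Set.countable_coe_iff]
    exact L.latticeEquivProd.toEquiv.countable_iff.mpr inferInstance
  have hconn : IsPreconnected ((L.lattice : Set ℂ)ᶜ) :=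
    (hc.isPathConnected_compl_of_one_lt_rank (by simp)).isConnected.isPreconnected
  have h0 := L.analyticOnNhd_derivWeierstrassP.eqOn_zero_of_preconnected_of_eventuallyEq_zero
    hconn hw h
  have hb := (L.analyticAt_derivWeierstrassPExcept 0).continuousAt
  have hlim : Filter.Tendsto (fun z : ℂ ↦ z ^ 3 * L.derivWeierstrassPExcept 0 z) (𝓝[≠] 0) (𝓝 0) := by
    have : ContinuousAt (fun z : ℂ ↦ z ^ 3 * L.derivWeierstrassPExcept 0 z) 0 :=
      (continuousAt_id.pow 3).mul hb
    have := this.tendsto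
    simp only [ne_eq, OfNat.ofNat_ne_zero, not_false_eq_true, zero_pow, zero_mul] at this
    exact this.mono_left nhdsWithin_le_nhds
  have hlim2 : Filter.Tendsto (fun z : ℂ ↦ z ^ 3 * L.derivWeierstrassPExcept 0 z) (𝓝[≠] 0) (𝓝 2) := by
    refine tendsto_const_nhds.congr' ?_
    filter_upwards [compl_lattice_mem_nhdsNE L 0, self_mem_nhdsWithin] with z hz hz0
    have e1 := L.derivWeierstrassPExcept_def 0 z
    have e2 : ℘'[L] z = 0 := h0 hz
    have hz0' : z ≠ 0 := hz0
    simp only [ZeroMemClass.coe_zero, sub_zero] at e1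
    rw [e1, e2]
    field_simp
    ring
  exact two_ne_zero (tendsto_nhds_unique hlim2 hlim)

/-- The second-order equation `℘'' = 6 ℘² - g₂ / 2`, in the form in which it holds at every point
outside the lattice, zeros of `℘'` included. -/
lemma deriv_derivWeierstrassP (L : PeriodPair) {w : ℂ} (hw : w ∉ L.lattice) :
    deriv ℘'[L] w = 6 * ℘[L] w ^ 2 - L.g₂ / 2 := by
  have hq := L.analyticOnNhd_derivWeierstrassP w hw
  have hp := L.analyticOnNhd_weierstrassP w hw
  have hU : ∀ᶠ z in 𝓝 w, z ∉ L.lattice := L.isClosed_lattice.isOpen_compl.mem_nhds hw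
  -- Off the zeros of `℘'`, the factor `℘'` cancels from the differentiated equation.
  have hne : ∀ᶠ z in 𝓝[≠] w, ℘'[L] z ≠ 0 :=
    hq.eventually_eq_zero_or_eventually_ne_zero.resolve_left
      (not_derivWeierstrassP_eventually_zero L hw)
  have key : ∀ᶠ z in 𝓝[≠] w, deriv ℘'[L] z = 6 * ℘[L] z ^ 2 - L.g₂ / 2 := by
    filter_upwards [hne, nhdsWithin_le_nhds hU] with z hz hzL
    have hqz := (L.analyticOnNhd_derivWeierstrassP z hzL).differentiableAt.hasDerivAt
    have hpz := hasDerivAt_weierstrassP L hzL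
    have hUz : ∀ᶠ y in 𝓝 z, y ∉ L.lattice := L.isClosed_lattice.isOpen_compl.mem_nhds hzL
    have d1 := hqz.pow 2
    have d2 := (((hpz.pow 3).const_mul 4).sub (hpz.const_mul L.g₂)).sub_const L.g₃
    have d3 := d2.congr_of_eventuallyEq (f₁ := fun y ↦ ℘'[L] y ^ 2)
      (hUz.mono fun y hy ↦ by simpa using L.derivWeierstrassP_sq y hy)
    have e := d1.unique d3
    apply mul_left_cancel₀ hz
    push_cast at e
    norm_num at e
    linear_combination e / 2
  have t1 : Filter.Tendsto (deriv ℘'[L]) (𝓝[≠] w) (𝓝 (deriv ℘'[L] w)) :=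
    hq.deriv.continuousAt.tendsto.mono_left nhdsWithin_le_nhds
  have t2 : Filter.Tendsto (fun z ↦ 6 * ℘[L] z ^ 2 - L.g₂ / 2) (𝓝[≠] w)
      (𝓝 (6 * ℘[L] w ^ 2 - L.g₂ / 2)) := by
    have : ContinuousAt (fun z ↦ 6 * ℘[L] z ^ 2 - L.g₂ / 2) w :=
      (continuousAt_const.mul (hp.continuousAt.pow 2)).sub continuousAt_const
    exact this.tendsto.mono_left nhdsWithin_le_nhds
  exact tendsto_nhds_unique t1 (t2.congr' (key.mono fun z hz ↦ hz.symm))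

lemma half_notMem : (1 / 2 : ℂ) ∉ sqPair.lattice := sqPair.ω₁_div_two_notMem_lattice

lemma I_half_notMem : (I / 2 : ℂ) ∉ sqPair.lattice := sqPair.ω₂_div_two_notMem_lattice

lemma derivWeierstrassP_one_half : ℘'[sqPair] (1 / 2) = 0 :=
  derivWeierstrassP_half _ (by simpa using! sqPair.ω₁_mem_lattice)

lemma derivWeierstrassP_I_half : ℘'[sqPair] (I / 2) = 0 :=
  derivWeierstrassP_half _ (by
    rw [mul_div_cancel₀ _ two_ne_zero]
    exact sqPair.ω₂_mem_lattice)

lemma weierstrassP_I_half : ℘[sqPair] (I / 2) = -℘[sqPair] (1 / 2) := by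
  rw [← weierstrassP_I_mul]
  congr 1
  ring

lemma sqPair_g₂ (he : ℘[sqPair] (1 / 2) ≠ 0) : sqPair.g₂ = 4 * ℘[sqPair] (1 / 2) ^ 2 := by
  have h := sqPair.derivWeierstrassP_sq _ half_notMem
  rw [derivWeierstrassP_one_half, sqPair_g₃] at h
  apply mul_right_cancel₀ he
  linear_combination h

/-- The decomposition `φ₃ = (c / 2) ℘' - 16 c e₁² ℘ / ℘'`, an exact differential plus a multiple
of `℘ / ℘'`. -/
lemma phi3_decomp (he : ℘[sqPair] (1 / 2) ≠ 0) (c : ℂ) {z : ℂ} (hz : z ∉ sqPair.lattice)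
    (hz' : ℘'[sqPair] z ≠ 0) :
    2 * c * ℘[sqPair] z * (℘[sqPair] z - 3 * ℘[sqPair] (1 / 2)) *
      (℘[sqPair] z + 3 * ℘[sqPair] (1 / 2)) / ℘'[sqPair] z =
    c / 2 * ℘'[sqPair] z - 16 * c * ℘[sqPair] (1 / 2) ^ 2 * (℘[sqPair] z / ℘'[sqPair] z) := by
  have h := sqPair.derivWeierstrassP_sq z hz
  rw [sqPair_g₃, sqPair_g₂ he] at h
  field_simp
  linear_combination (-c) * h

lemma exact_part (c a : ℂ) :
    (∀ᶠ z in 𝓝[≠] a, HasDerivAt (fun z ↦ c / 2 * ℘[sqPair] z) (c / 2 * ℘'[sqPair] z) z) ∧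
    ∀ᶠ z in 𝓝[≠] a, ContinuousAt (fun z ↦ c / 2 * ℘'[sqPair] z) z := by
  constructor
  · filter_upwards [compl_lattice_mem_nhdsNE sqPair a] with z hz
    exact (hasDerivAt_weierstrassP _ hz).const_mul _
  · filter_upwards [compl_lattice_mem_nhdsNE sqPair a] with z hz
    exact continuousAt_const.mul (sqPair.analyticOnNhd_derivWeierstrassP z hz).continuousAt

/-- At a half-period `w` where `℘ w = ± e₁`, the zero of `℘'` is simple with `℘'' w = 4 e₁²`, and
the residue of `φ₃` is `-4 c ℘ w`. -/
lemma isResidue_half (he : ℘[sqPair] (1 / 2) ≠ 0) (c : ℂ) {w : ℂ} (hw : w ∉ sqPair.lattice)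
    (hw' : ℘'[sqPair] w = 0) (hpw : ℘[sqPair] w ^ 2 = ℘[sqPair] (1 / 2) ^ 2) :
    IsResidue (fun z ↦ 2 * c * ℘[sqPair] z * (℘[sqPair] z - 3 * ℘[sqPair] (1 / 2)) *
      (℘[sqPair] z + 3 * ℘[sqPair] (1 / 2)) / ℘'[sqPair] z) w (-4 * c * ℘[sqPair] w) := by
  have hq := sqPair.analyticOnNhd_derivWeierstrassP w hw
  have hp := sqPair.analyticOnNhd_weierstrassP w hw
  have hg : AnalyticAt ℂ (dslope ℘'[sqPair] w) w := by
    obtain ⟨P, hP⟩ := hq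
    exact ⟨_, hP.has_fpower_series_dslope_fslope⟩
  have hgw : dslope ℘'[sqPair] w w = 4 * ℘[sqPair] (1 / 2) ^ 2 := by
    rw [dslope_same, deriv_derivWeierstrassP _ hw, sqPair_g₂ he]
    linear_combination 6 * hpw
  have hgw0 : dslope ℘'[sqPair] w w ≠ 0 := by
    rw [hgw]
    exact mul_ne_zero (by norm_num) (pow_ne_zero _ he)
  have hh : AnalyticAt ℂ (fun z ↦ -16 * c * ℘[sqPair] (1 / 2) ^ 2 *
      (℘[sqPair] z / dslope ℘'[sqPair] w z)) w :=
    analyticAt_const.mul (hp.div hg hgw0)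
  have hval : -16 * c * ℘[sqPair] (1 / 2) ^ 2 * (℘[sqPair] w / dslope ℘'[sqPair] w w) =
      -4 * c * ℘[sqPair] w := by
    rw [hgw]
    field_simp
    ring
  rw [← hval]
  refine isResidue_of_eq_deriv_add (exact_part c w).1 (exact_part c w).2 hh ?_
  filter_upwards [compl_lattice_mem_nhdsNE sqPair w, self_mem_nhdsWithin,
    nhdsWithin_le_nhds (hg.continuousAt.eventually_ne hgw0)] with z hz hzw hgz
  have hzw' : z - w ≠ 0 := sub_ne_zero.mpr hzw
  have hfac : ℘'[sqPair] z = (z - w) * dslope ℘'[sqPair] w z := by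
    have := sub_smul_dslope ℘'[sqPair] w z
    rw [hw', sub_zero, smul_eq_mul] at this
    exact this.symm
  rw [phi3_decomp he c hz (by rw [hfac]; exact mul_ne_zero hzw' hgz), hfac]
  field_simp
  ring

/-- With `℘ = z⁻² + a` and `℘' = -2 z⁻³ + b`, the quotient `℘ / ℘'` agrees near `0` with
`(z + z³ a) / (z³ b - 2)`, which is holomorphic there. -/
lemma isResidue_zero (he : ℘[sqPair] (1 / 2) ≠ 0) (c : ℂ) :
    IsResidue (fun z ↦ 2 * c * ℘[sqPair] z * (℘[sqPair] z - 3 * ℘[sqPair] (1 / 2)) *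
      (℘[sqPair] z + 3 * ℘[sqPair] (1 / 2)) / ℘'[sqPair] z) 0 0 := by
  have ha := sqPair.analyticAt_weierstrassPExcept 0
  have hb := sqPair.analyticAt_derivWeierstrassPExcept 0
  have hden : AnalyticAt ℂ (fun z ↦ z ^ 3 * sqPair.derivWeierstrassPExcept 0 z - 2) 0 :=
    ((analyticAt_id.pow 3).mul hb).sub analyticAt_const
  have hden0 : (fun z ↦ z ^ 3 * sqPair.derivWeierstrassPExcept 0 z - 2) 0 ≠ 0 := by simp
  have hh : AnalyticAt ℂ (fun z ↦ z * (-16 * c * ℘[sqPair] (1 / 2) ^ 2 *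
      ((z + z ^ 3 * sqPair.weierstrassPExcept 0 z) / (z ^ 3 * sqPair.derivWeierstrassPExcept 0 z - 2)))) 0 :=
    analyticAt_id.mul (analyticAt_const.mul
      ((analyticAt_id.add ((analyticAt_id.pow 3).mul ha)).div hden hden0))
  have := isResidue_of_eq_deriv_add (f := fun z ↦ 2 * c * ℘[sqPair] z *
      (℘[sqPair] z - 3 * ℘[sqPair] (1 / 2)) *
      (℘[sqPair] z + 3 * ℘[sqPair] (1 / 2)) / ℘'[sqPair] z)
    (exact_part c 0).1 (exact_part c 0).2 hh ?_
  · simpa only [zero_mul] using this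
  filter_upwards [compl_lattice_mem_nhdsNE sqPair 0, self_mem_nhdsWithin,
    nhdsWithin_le_nhds (hden.continuousAt.eventually_ne hden0)] with z hz hz0 hdz
  have hz0' : z ≠ 0 := hz0
  have e1 := sqPair.weierstrassPExcept_def 0 z
  have e2 := sqPair.derivWeierstrassPExcept_def 0 z
  simp only [ZeroMemClass.coe_zero, sub_zero] at e1 e2
  have e1' : z ^ 3 * ℘[sqPair] z = z + z ^ 3 * sqPair.weierstrassPExcept 0 z := by
    rw [e1]
    field_simp
    ring
  have e2' : z ^ 3 * ℘'[sqPair] z = z ^ 3 * sqPair.derivWeierstrassPExcept 0 z - 2 := by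
    rw [e2]
    field_simp
    ring
  have hq0 : ℘'[sqPair] z ≠ 0 := by
    intro h
    rw [h, mul_zero] at e2'
    exact hdz e2'.symm
  rw [phi3_decomp he c hz hq0, ← e1', ← e2', mul_div_mul_left _ _ (pow_ne_zero 3 hz0'), sub_zero,
    inv_mul_cancel_left₀ hz0']
  ring

/-- The residues of phi3 = 2c wp (wp - 3e1)(wp + 3e1)/wp' dz at 1/2, i/2 and 0
are -4 c e1, 4 c e1 and 0, where e1 = wp(1/2) and c = (1/e1) sqrt(6 pi/73). -/
theorem phi3_residues :
    let e₁ : ℂ := wp (1 / 2)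
    let c : ℂ := (1 / e₁) * (Real.sqrt (6 * Real.pi / 73) : ℂ)
    let φ₃ : ℂ → ℂ := fun z =>
      2 * c * wp z * (wp z - 3 * e₁) * (wp z + 3 * e₁) / deriv wp z
    IsResidue φ₃ (1 / 2) (-4 * c * e₁) ∧
    IsResidue φ₃ (Complex.I / 2) (4 * c * e₁) ∧
    IsResidue φ₃ 0 0 := by
  intro e₁ c φ₃
  have hwp : wp = ℘[sqPair] := wp_eq
  have he₁ : e₁ = ℘[sqPair] (1 / 2) := by rw [← hwp]
  by_cases he : ℘[sqPair] (1 / 2) = 0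
  · have hc : c = 0 := by
      simp only [c]
      rw [he₁, he, div_zero, zero_mul]
    have hφ : φ₃ = fun _ ↦ 0 := by
      funext z
      simp [φ₃, hc]
    simp [hφ, hc, IsResidue, circleIntegral]
  have hφ : φ₃ = fun z ↦ 2 * c * ℘[sqPair] z * (℘[sqPair] z - 3 * ℘[sqPair] (1 / 2)) *
      (℘[sqPair] z + 3 * ℘[sqPair] (1 / 2)) / ℘'[sqPair] z := by
    funext z
    simp only [φ₃, he₁, hwp, deriv_weierstrassP]
  rw [hφ, he₁]
  refine ⟨isResidue_half he c half_notMem derivWeierstrassP_one_half rfl, ?_,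
    isResidue_zero he c⟩
  have h := isResidue_half he c I_half_notMem derivWeierstrassP_I_half
    (by rw [weierstrassP_I_half, neg_sq])
  rw [weierstrassP_I_half] at h
  convert h using 1
  ring
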